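/- For every k with 0 ≤ k ≤ p − 2, if h_{k+1} = h_k (equivalently, c(k + 1 + h_k) = h_k), then the squared shifted e-indices satisfy e_{k+1}² = e_k² − (c(k+1) − c(k + 1 + h_k)). (Key identity in the proof of Proposition 4.8(i).) -/

import Mathlib

/-- The shifted h-index of order `k`: the largest `m` with `1 ≤ m ≤ p - k` and
`c (k + m) ≥ m` (the Hirsch h-index of the tail sequence `c (k+1), …, c p`).
Taken as the `sup` of the (finite) set of such `m`, which equals its maximum
when the set is nonempty and is `0` otherwise. -/
def hIdx (p : ℕ) (c : ℕ → ℕ) (k : ℕ) : ℕ :=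
  ((Finset.Icc 1 (p - k)).filter (fun m => m ≤ c (k + m))).sup id

/-- The shifted core sum `N_k = Σ_{j=k+1}^{k+h_k} c j`. -/
def coreSum (p : ℕ) (c : ℕ → ℕ) (k : ℕ) : ℕ :=
  ∑ j ∈ Finset.Icc (k + 1) (k + hIdx p c k), c j

/-- The shifted e-index `e_k = √(N_k − h_k²)`. -/
noncomputable def eIdx (p : ℕ) (c : ℕ → ℕ) (k : ℕ) : ℝ :=
  Real.sqrt ((coreSum p c k : ℝ) - (hIdx p c k : ℝ) ^ 2)

/-!
Since every term of the core is at least `h_k`, the radicand is nonnegative and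
`e_k² = N_k - h_k²`. When `h_{k+1} = h_k`, passing from `N_k` to `N_{k+1}` slides a window of
fixed length one step to the right: it loses `c (k + 1)` and gains `c (k + 1 + h_k)`.
-/

theorem sum_Ioc_add_left_eq_sum_Ico_add_right {α M : Type*} [PartialOrder α]
    [LocallyFiniteOrder α] [AddCommMonoid M] (f : α → M) {a b : α} (hab : a ≤ b) :
    ∑ x ∈ Finset.Ioc a b, f x + f a = ∑ x ∈ Finset.Ico a b, f x + f b :=
  (Finset.sum_Ioc_add_eq_sum_Icc hab).trans (Finset.sum_Ico_add_eq_sum_Icc hab).symm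

theorem hIdx_le_sub (p : ℕ) (c : ℕ → ℕ) (k : ℕ) : hIdx p c k ≤ p - k :=
  Finset.sup_le fun _ hm => (Finset.mem_Icc.1 (Finset.mem_filter.1 hm).1).2

theorem hIdx_le_apply_add_hIdx (p : ℕ) (c : ℕ → ℕ) (k : ℕ) :
    hIdx p c k ≤ c (k + hIdx p c k) := by
  refine Finset.sup_induction (p := fun m => m ≤ c (k + m)) (Nat.zero_le _) ?_
    fun m hm => (Finset.mem_filter.1 hm).2
  intro a ha b hb
  rcases max_choice a b with hmax | hmax <;> rwa [hmax]

section AntitoneTail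

variable {p : ℕ} {c : ℕ → ℕ} {k : ℕ}

theorem hIdx_le_of_mem_core (hc : AntitoneOn c (Set.Icc (k + 1) p)) {j : ℕ}
    (hj : j ∈ Finset.Icc (k + 1) (k + hIdx p c k)) : hIdx p c k ≤ c j := by
  obtain ⟨hkj, hjh⟩ := Finset.mem_Icc.1 hj
  have hend : k + hIdx p c k ≤ p := by
    have := hIdx_le_sub p c k
    omega
  exact (hIdx_le_apply_add_hIdx p c k).trans
    (hc ⟨hkj, hjh.trans hend⟩ ⟨hkj.trans hjh, hend⟩ hjh)

theorem hIdx_sq_le_coreSum (hc : AntitoneOn c (Set.Icc (k + 1) p)) :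
    hIdx p c k ^ 2 ≤ coreSum p c k := by
  have hcard : (Finset.Icc (k + 1) (k + hIdx p c k)).card = hIdx p c k := by
    rw [Nat.card_Icc]
    omega
  calc hIdx p c k ^ 2
      = (Finset.Icc (k + 1) (k + hIdx p c k)).card • hIdx p c k := by
        rw [hcard, smul_eq_mul, sq]
    _ ≤ coreSum p c k := Finset.card_nsmul_le_sum _ _ _ fun _ hj => hIdx_le_of_mem_core hc hj

theorem eIdx_sq (hc : AntitoneOn c (Set.Icc (k + 1) p)) :
    eIdx p c k ^ 2 = (coreSum p c k : ℝ) - (hIdx p c k : ℝ) ^ 2 :=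
  Real.sq_sqrt (sub_nonneg.2 (mod_cast hIdx_sq_le_coreSum hc))

end AntitoneTail

theorem coreSum_succ_add_of_hIdx_succ_eq {p : ℕ} {c : ℕ → ℕ} {k : ℕ}
    (hh : hIdx p c (k + 1) = hIdx p c k) :
    coreSum p c (k + 1) + c (k + 1) = coreSum p c k + c (k + 1 + hIdx p c k) := by
  have hIoc : Finset.Icc (k + 1 + 1) (k + 1 + hIdx p c k) =
      Finset.Ioc (k + 1) (k + 1 + hIdx p c k) := Finset.Icc_add_one_left_eq_Ioc _ _
  have hIco : Finset.Icc (k + 1) (k + hIdx p c k) =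
      Finset.Ico (k + 1) (k + 1 + hIdx p c k) := by
    rw [Nat.add_right_comm k 1, Finset.Ico_add_one_right_eq_Icc]
  rw [coreSum, coreSum, hh, hIoc, hIco]
  exact sum_Ioc_add_left_eq_sum_Ico_add_right c (Nat.le_add_right _ _)

theorem stmt_8 (p : ℕ) (hp : 1 ≤ p) (c : ℕ → ℕ)
    (hmono : ∀ i j, 1 ≤ i → i ≤ j → j ≤ p → c j ≤ c i)
    (hpos : ∀ j, 1 ≤ j → j ≤ p → 1 ≤ c j)
    (hzero : ∀ j, p < j → c j = 0)
    (k : ℕ) (hk : k + 2 ≤ p)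
    (hh : hIdx p c (k + 1) = hIdx p c k) :
    eIdx p c (k + 1) ^ 2 =
      eIdx p c k ^ 2 - ((c (k + 1) : ℝ) - (c (k + 1 + hIdx p c k) : ℝ)) := by
  have hc (i : ℕ) : AntitoneOn c (Set.Icc (i + 1) p) := fun a ha b hb hab =>
    hmono a b ((Nat.le_add_left 1 i).trans ha.1) hab hb.2
  have hslide : (coreSum p c (k + 1) : ℝ) + c (k + 1) =
      coreSum p c k + c (k + 1 + hIdx p c k) :=
    mod_cast coreSum_succ_add_of_hIdx_succ_eq hh
  rw [eIdx_sq (hc _), eIdx_sq (hc _), hh]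
  linarith
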